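/- Let ε > 0 and let H_ε be the Fourier multiplier on ℝ² with symbol φ_ε(|ξ|) = (|ξ|/ε)√(1+ε²|ξ|²). Then there exists C > 0, independent of ε, t, k and f, such that for every k ∈ ℤ with 2^k ε ≤ 1 and every t > 0, ‖P_{2^k}(e^{itH_ε} f)‖_{L^∞(ℝ²)} ≤ C (t/ε)^{-1/2} 2^{3k/2} ‖P_{2^k} f‖_{L¹(ℝ²)}. -/

import Mathlib

open MeasureTheory Complex
open scoped FourierTransform ENNReal

noncomputable section

/-- Euclidean space `ℝ²`. -/
abbrev E2 := EuclideanSpace ℝ (Fin 2)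

/-- The propagator `e^{itH_ε}` on `ℝ²`, where `H_ε` is the Fourier multiplier with symbol
`φ_ε(|ξ|) = (|ξ|/ε)√(1+ε²|ξ|²)`: `e^{itH_ε} f = 𝓕⁻¹(e^{itφ_ε(|ξ|)} 𝓕f)`. -/
def Heps (ε t : ℝ) (f : E2 → ℂ) : E2 → ℂ :=
  𝓕⁻ fun ξ =>
    Complex.exp (Complex.I * ((t * (‖ξ‖ / ε * Real.sqrt (1 + ε ^ 2 * ‖ξ‖ ^ 2))) : ℝ)) * 𝓕 f ξ

/-- The Littlewood–Paley projection `P_{2^k} g = 𝓕⁻¹(ψ(2^{-k}|ξ|) 𝓕g)`. -/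
def LP (ψ : ℝ → ℝ) (k : ℤ) (g : E2 → ℂ) : E2 → ℂ :=
  𝓕⁻ fun ξ => ((ψ ((2 : ℝ) ^ (-k) * ‖ξ‖) : ℝ) : ℂ) * 𝓕 g ξ

lemma aux_half (s : ℝ) (hs : 1 ≤ s) :
    ‖∫ θ in (0:ℝ)..Real.pi, Complex.exp (I * ((s * Real.cos θ : ℝ) : ℂ))‖ ≤ 10 / √s := by
  have hs0 : 0 < s := by linarith
  set q := √s with hq
  have hq1 : 1 ≤ q := by rw [hq]; exact Real.one_le_sqrt.mpr hs
  have hqq : q * q = s := Real.mul_self_sqrt hs0.le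
  set δ := 1 / q with hδ
  have hδ0 : 0 < δ := by positivity
  have hδ1 : δ ≤ 1 := by rw [hδ, div_le_one (by linarith)]; exact hq1
  have hpi := Real.pi_gt_three
  have hpi2 := Real.pi_lt_d2
  have hcont : Continuous (fun θ : ℝ => Complex.exp (I * ((s * Real.cos θ : ℝ) : ℂ))) := by
    fun_prop
  have hnorm : ∀ x : ℝ, ‖Complex.exp (I * (x : ℂ))‖ = 1 := fun x => by
    rw [mul_comm]; exact Complex.norm_exp_ofReal_mul_I x
  have hI : ∀ a b : ℝ, IntervalIntegrable (fun θ : ℝ => Complex.exp (I * ((s * Real.cos θ : ℝ) : ℂ))) volume a b :=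
    fun a b => hcont.intervalIntegrable a b
  have hshort : ∀ a b : ℝ, ‖∫ θ in a..b, Complex.exp (I * ((s * Real.cos θ : ℝ) : ℂ))‖ ≤ 1 * |b - a| := fun a b =>
    intervalIntegral.norm_integral_le_of_norm_le_const (fun x _ => (hnorm _).le)
  have hsplit : (∫ θ in (0:ℝ)..Real.pi, Complex.exp (I * ((s * Real.cos θ : ℝ) : ℂ))) =
      (∫ θ in (0:ℝ)..δ, Complex.exp (I * ((s * Real.cos θ : ℝ) : ℂ))) +
      (∫ θ in δ..(Real.pi - δ), Complex.exp (I * ((s * Real.cos θ : ℝ) : ℂ))) +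
      (∫ θ in (Real.pi - δ)..Real.pi, Complex.exp (I * ((s * Real.cos θ : ℝ) : ℂ))) := by
    rw [intervalIntegral.integral_add_adjacent_intervals (hI _ _) (hI _ _),
      intervalIntegral.integral_add_adjacent_intervals (hI _ _) (hI _ _)]
  have hle : δ ≤ Real.pi - δ := by linarith
  have hsinpos : ∀ x ∈ Set.uIcc δ (Real.pi - δ), 0 < Real.sin x := by
    intro x hx
    rw [Set.uIcc_of_le hle] at hx
    exact Real.sin_pos_of_pos_of_lt_pi (by linarith [hx.1]) (by linarith [hx.2])
  have hsinδ : δ / 2 ≤ Real.sin δ := by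
    have := Real.mul_le_sin hδ0.le (by linarith)
    refine le_trans ?_ this
    rw [div_mul_eq_mul_div, div_le_div_iff₀ (by norm_num) (by linarith)]
    nlinarith
  have hsδ : 0 < Real.sin δ := by linarith
  have hmid : ‖∫ θ in δ..(Real.pi - δ), Complex.exp (I * ((s * Real.cos θ : ℝ) : ℂ))‖ ≤ 8 / q := by
    have hu : ∀ x ∈ Set.uIcc δ (Real.pi - δ),
        HasDerivAt (fun θ : ℝ => I * (((s * Real.sin θ)⁻¹ : ℝ) : ℂ))
          (I * ((-(s * Real.cos x) / (s * Real.sin x)^2 : ℝ) : ℂ)) x := by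
      intro x hx
      have h1 : HasDerivAt (fun θ : ℝ => (s * Real.sin θ)⁻¹) (-(s * Real.cos x) / (s * Real.sin x)^2) x :=
        ((Real.hasDerivAt_sin x).const_mul s).fun_inv (mul_pos hs0 (hsinpos x hx)).ne'
      exact h1.ofReal_comp.const_mul I
    have hv : ∀ x ∈ Set.uIcc δ (Real.pi - δ),
        HasDerivAt (fun θ : ℝ => Complex.exp (I * ((s * Real.cos θ : ℝ) : ℂ)))
          (Complex.exp (I * ((s * Real.cos x : ℝ) : ℂ)) * (I * ((s * -Real.sin x : ℝ) : ℂ))) x := by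
      intro x hx
      exact ((((Real.hasDerivAt_cos x).const_mul s).ofReal_comp).const_mul I).cexp
    have hu'c : ContinuousOn (fun x : ℝ => (I * ((-(s * Real.cos x) / (s * Real.sin x)^2 : ℝ) : ℂ))) (Set.uIcc δ (Real.pi - δ)) := by
      refine continuousOn_const.mul (Complex.continuous_ofReal.comp_continuousOn ?_)
      refine ContinuousOn.div (by fun_prop) (by fun_prop) ?_
      intro x hx
      have := mul_pos hs0 (hsinpos x hx)
      positivity
    have hv'c : Continuous (fun x : ℝ => (Complex.exp (I * ((s * Real.cos x : ℝ) : ℂ)) * (I * ((s * -Real.sin x : ℝ) : ℂ)))) := by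
      fun_prop
    have hibp := intervalIntegral.integral_mul_deriv_eq_deriv_mul hu hv hu'c.intervalIntegrable (hv'c.intervalIntegrable _ _)
    have heq : (∫ θ in δ..(Real.pi - δ), Complex.exp (I * ((s * Real.cos θ : ℝ) : ℂ))) =
        ∫ x in δ..(Real.pi - δ), (I * (((s * Real.sin x)⁻¹ : ℝ) : ℂ)) * (Complex.exp (I * ((s * Real.cos x : ℝ) : ℂ)) * (I * ((s * -Real.sin x : ℝ) : ℂ))) := by
      apply intervalIntegral.integral_congr
      intro x hx
      have h1 : (s : ℂ) * (Real.sin x : ℂ) ≠ 0 := by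
        exact_mod_cast (mul_pos hs0 (hsinpos x hx)).ne'
      simp only [ofReal_inv, ofReal_mul, ofReal_neg]
      have h2 : (s : ℂ) ≠ 0 := left_ne_zero_of_mul h1
      have h3 : (Real.sin x : ℂ) ≠ 0 := right_ne_zero_of_mul h1
      field_simp
      rw [I_sq]; ring
    rw [heq, hibp]
    have hb : ∀ x, Real.sin x = Real.sin δ → ‖(I * (((s * Real.sin x)⁻¹ : ℝ) : ℂ)) * Complex.exp (I * ((s * Real.cos x : ℝ) : ℂ))‖ ≤ 2 / q := by
      intro x hx
      rw [norm_mul, norm_mul, hnorm, norm_I, one_mul, mul_one, norm_real, hx, Real.norm_of_nonneg (by positivity)]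
      rw [inv_le_comm₀ (by positivity) (by positivity), inv_div]
      have : q / 2 = s * (δ / 2) := by rw [hδ, ← hqq]; field_simp
      rw [this]; gcongr
    have hint : ‖∫ x in δ..(Real.pi - δ), (I * ((-(s * Real.cos x) / (s * Real.sin x)^2 : ℝ) : ℂ)) * Complex.exp (I * ((s * Real.cos x : ℝ) : ℂ))‖ ≤ 4 / q := by
      have hF : ∀ x ∈ Set.uIcc δ (Real.pi - δ), HasDerivAt (fun x => -(s⁻¹ * (Real.cos x / Real.sin x))) (s⁻¹ * (1 / Real.sin x ^ 2)) x := by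
        intro x hx
        have h1 := (((Real.hasDerivAt_cos x).div (Real.hasDerivAt_sin x) (hsinpos x hx).ne').const_mul s⁻¹).neg
        convert! h1 using 1
        have := Real.sin_sq_add_cos_sq x
        have h0 := (hsinpos x hx).ne'
        field_simp
        linarith
      have hFc : ContinuousOn (fun x => s⁻¹ * (1 / Real.sin x ^ 2)) (Set.uIcc δ (Real.pi - δ)) := by
        refine continuousOn_const.mul (ContinuousOn.div (by fun_prop) (by fun_prop) ?_)
        intro x hx
        have := (hsinpos x hx)
        positivity
      refine (intervalIntegral.norm_integral_le_of_norm_le hle ?_ hFc.intervalIntegrable).trans ?_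
      · refine Filter.Eventually.of_forall fun x hx => ?_
        have hsx := hsinpos x (by rw [Set.uIcc_of_le hle]; exact Set.Ioc_subset_Icc_self hx)
        rw [norm_mul, norm_mul, hnorm, norm_I, one_mul, mul_one, norm_real, Real.norm_eq_abs, abs_div, abs_neg, abs_mul, abs_of_pos hs0, abs_of_pos (by positivity : 0 < (s * Real.sin x)^2)]
        have h1 := Real.abs_cos_le_one x
        rw [show s⁻¹ * (1 / Real.sin x ^ 2) = s * 1 / (s * Real.sin x)^2 by field_simp]
        gcongr
      · rw [intervalIntegral.integral_eq_sub_of_hasDerivAt hF hFc.intervalIntegrable]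
        rw [Real.cos_pi_sub, Real.sin_pi_sub]
        have hsx : 0 < Real.sin δ := by linarith
        have h1 : Real.cos δ / Real.sin δ ≤ 1 / (δ / 2) := by
          gcongr
          exact Real.cos_le_one _
        have h2 : s⁻¹ * (1 / (δ / 2)) = 2 / q := by
          rw [hδ, ← hqq]; field_simp
        have h3 : s⁻¹ * (Real.cos δ / Real.sin δ) ≤ 2 / q := by
          rw [← h2]; gcongr
        have h4 : 4 / q = 2 / q + 2 / q := by ring
        rw [neg_div]
        linarith
    refine (norm_sub_le _ _).trans ?_
    refine (add_le_add (norm_sub_le _ _) hint).trans ?_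
    have h1 := hb (Real.pi - δ) (Real.sin_pi_sub _)
    have h2 := hb δ rfl
    have h4 : 8 / q = 2 / q + 2 / q + 4 / q := by ring
    linarith
  rw [hsplit]
  have h1 := hshort 0 δ
  have h2 := hshort (Real.pi - δ) Real.pi
  rw [abs_of_pos (by linarith)] at h1 h2
  refine (norm_add₃_le).trans ?_
  have h4 : 10 / q = δ + 8 / q + δ := by rw [hδ]; ring
  linarith

lemma aux_bessel (s θ₀ : ℝ) (hs : 0 < s) :
    ‖∫ θ in (-Real.pi)..Real.pi, Complex.exp (I * ((s * Real.cos (θ - θ₀) : ℝ) : ℂ))‖ ≤ 20 / √s := by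
  have hnorm : ∀ x : ℝ, ‖Complex.exp (I * (x : ℂ))‖ = 1 := fun x => by
    rw [mul_comm]; exact Complex.norm_exp_ofReal_mul_I x
  have hpi := Real.pi_gt_three
  have hpi2 := Real.pi_lt_d2
  rcases le_total 1 s with h | h
  · have hper : Function.Periodic (fun θ : ℝ => Complex.exp (I * ((s * Real.cos θ : ℝ) : ℂ))) (2 * Real.pi) := by
      intro x; simp only [Real.cos_add_two_pi]
    have hcont : Continuous (fun θ : ℝ => Complex.exp (I * ((s * Real.cos θ : ℝ) : ℂ))) := by
      fun_prop
    rw [intervalIntegral.integral_comp_sub_right (fun θ => Complex.exp (I * ((s * Real.cos θ : ℝ) : ℂ)))]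
    have h1 := hper.intervalIntegral_add_eq (-Real.pi - θ₀) (-Real.pi)
    rw [show -Real.pi - θ₀ + 2 * Real.pi = Real.pi - θ₀ by ring, show -Real.pi + 2 * Real.pi = Real.pi by ring] at h1
    rw [h1, ← intervalIntegral.integral_add_adjacent_intervals (hcont.intervalIntegrable _ 0) (hcont.intervalIntegrable _ _)]
    have h2 : (∫ θ in (-Real.pi)..0, Complex.exp (I * ((s * Real.cos θ : ℝ) : ℂ))) = ∫ θ in (0:ℝ)..Real.pi, Complex.exp (I * ((s * Real.cos θ : ℝ) : ℂ)) := by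
      have := intervalIntegral.integral_comp_neg (a := 0) (b := Real.pi) (fun θ : ℝ => Complex.exp (I * ((s * Real.cos θ : ℝ) : ℂ)))
      simp only [Real.cos_neg, neg_zero] at this
      exact this.symm
    rw [h2]
    refine (norm_add_le _ _).trans ?_
    have := aux_half s h
    have h4 : 20 / √s = 10 / √s + 10 / √s := by ring
    linarith
  · refine (intervalIntegral.norm_integral_le_of_norm_le_const (fun x _ => (hnorm _).le)).trans ?_
    have h1 : √s ≤ 1 := Real.sqrt_le_one.mpr h
    have h0 : 0 < √s := Real.sqrt_pos.mpr hs
    rw [abs_of_pos (by linarith), le_div_iff₀ h0]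
    nlinarith

lemma aux_radial (g g' : ℝ → ℝ) (M : ℝ) (hg : ∀ r, HasDerivAt g (g' r) r) (hg'c : Continuous g')
    (hM : ∀ r ∈ Set.Icc (1/4:ℝ) (9/4), |g r| ≤ M) (hM' : ∀ r ∈ Set.Icc (1/4:ℝ) (9/4), |g' r| ≤ M)
    (h1 : g (1/4) = 0) (h2 : g (9/4) = 0) (l a c : ℝ) (hl : 0 < l) (ha : 0 < a) (ha1 : a ≤ 1)
    (hc : |c| ≤ l / 2) :
    ‖∫ r in (1/4:ℝ)..(9/4), (g r : ℂ) * Complex.exp (I * ((l * (r * √(1 + a^2 * r^2)) + c * r : ℝ) : ℂ))‖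
      ≤ 60 * M / l := by
  have hnorm : ∀ x : ℝ, ‖Complex.exp (I * (x : ℂ))‖ = 1 := fun x => by
    rw [mul_comm]; exact Complex.norm_exp_ofReal_mul_I x
  have hgc : Continuous g := continuous_iff_continuousAt.mpr fun r => (hg r).continuousAt
  have hM0 : 0 ≤ M := (abs_nonneg _).trans (hM 1 (by constructor <;> norm_num))
  set u : ℝ → ℝ := fun r => √(1 + a^2 * r^2) with hu
  have huc : Continuous u := by rw [hu]; fun_prop
  have hu1 : ∀ r, 1 ≤ u r := fun r => Real.one_le_sqrt.mpr (by nlinarith [mul_nonneg (sq_nonneg a) (sq_nonneg r)])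
  have hupos : ∀ r, 0 < u r := fun r => by linarith [hu1 r]
  have hune : ∀ r, u r ≠ 0 := fun r => (hupos r).ne'
  have husq : ∀ r, u r ^ 2 = 1 + a^2 * r^2 := fun r => Real.sq_sqrt (by positivity)
  have hud : ∀ r, HasDerivAt u (a^2 * r / u r) r := by
    intro r
    have h : HasDerivAt (fun r : ℝ => 1 + a^2 * r^2) (a^2 * (2 * r)) r := by
      have := (((hasDerivAt_id r).pow 2).const_mul (a^2)).const_add 1
      convert! this using 1
      simp
    have := h.sqrt (by positivity)
    convert! this using 1
    show a^2 * r / u r = a^2 * (2 * r) / (2 * u r)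
    have := hune r
    field_simp
  set P : ℝ → ℝ := fun r => l * (2 * u r - (u r)⁻¹) + c with hP
  set P' : ℝ → ℝ := fun r => l * (2 * (a^2 * r / u r) - -(a^2 * r / u r) / (u r)^2) with hP'
  have hPd : ∀ r, HasDerivAt P (P' r) r := fun r =>
    (((((hud r).const_mul 2).fun_sub ((hud r).fun_inv (hune r))).const_mul l).add_const c)
  have hPc : Continuous P := continuous_iff_continuousAt.mpr fun r => (hPd r).continuousAt
  have hP'c : Continuous P' := by
    rw [hP']
    refine continuous_const.mul ((continuous_const.mul (Continuous.div (by fun_prop) huc hune)).sub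
      (Continuous.div (Continuous.div (by fun_prop) huc hune).neg (by fun_prop) (fun r => pow_ne_zero 2 (hune r))))
  have hPl : ∀ r, l / 2 ≤ P r := by
    intro r
    have h3 : (u r)⁻¹ ≤ 1 := inv_le_one_of_one_le₀ (hu1 r)
    have h4 := hu1 r
    have h5 := (abs_le.mp hc).1
    have : l * 1 ≤ l * (2 * u r - (u r)⁻¹) := by gcongr; linarith
    simp only [hP]
    linarith
  have hPpos : ∀ r, 0 < P r := fun r => by linarith [hPl r]
  have hP'b : ∀ r ∈ Set.Icc (1/4:ℝ) (9/4), |P' r| ≤ 7 * l := by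
    intro r hr
    have hr0 : 0 ≤ r := by linarith [hr.1]
    have h3 : a^2 * r / u r ≤ 9/4 := by
      rw [div_le_iff₀ (hupos r)]
      have : a^2 ≤ 1 := by nlinarith
      nlinarith [hr.2, hu1 r]
    have h3' : 0 ≤ a^2 * r / u r := div_nonneg (by positivity) (hupos r).le
    have h4 : (a^2 * r / u r) / (u r)^2 ≤ a^2 * r / u r := div_le_self h3' (by nlinarith [hu1 r])
    have h4' : 0 ≤ (a^2 * r / u r) / (u r)^2 := by positivity
    simp only [hP']
    rw [abs_mul, abs_of_pos hl, neg_div, sub_neg_eq_add, abs_of_nonneg (by linarith), mul_comm]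
    gcongr
    linarith
  have hU : ∀ x ∈ Set.uIcc (1/4:ℝ) (9/4), HasDerivAt (fun r : ℝ => -I * ((g r / P r : ℝ) : ℂ))
      (-I * (((g' x * P x - g x * P' x) / (P x)^2 : ℝ) : ℂ)) x := fun x _ =>
    (((hg x).fun_div (hPd x) (hPpos x).ne').ofReal_comp).const_mul (-I)
  have hV : ∀ x ∈ Set.uIcc (1/4:ℝ) (9/4),
      HasDerivAt (fun r : ℝ => Complex.exp (I * ((l * (r * u r) + c * r : ℝ) : ℂ)))
      (Complex.exp (I * ((l * (x * u x) + c * x : ℝ) : ℂ)) * (I * ((P x : ℝ) : ℂ))) x := by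
    intro x _
    have h : HasDerivAt (fun r : ℝ => l * (r * u r) + c * r) (P x) x := by
      have := ((((hasDerivAt_id x).mul (hud x)).const_mul l).add ((hasDerivAt_id x).const_mul c))
      convert! this using 1
      have h3 := hune x
      have h4 := husq x
      simp only [hP, id]
      field_simp
      rw [show x ^ 2 * a ^ 2 = u x ^2 - 1 by rw [h4]; ring]
      ring
    exact (h.ofReal_comp.const_mul I).cexp
  have hU'c : Continuous (fun x : ℝ => -I * (((g' x * P x - g x * P' x) / (P x)^2 : ℝ) : ℂ)) := by
    refine continuous_const.mul (Complex.continuous_ofReal.comp ?_)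
    exact Continuous.div (by fun_prop) (by fun_prop) (fun r => pow_ne_zero 2 (hPpos r).ne')
  have hV'c : Continuous (fun x : ℝ => Complex.exp (I * ((l * (x * u x) + c * x : ℝ) : ℂ)) * (I * ((P x : ℝ) : ℂ))) := by
    fun_prop
  have hibp := intervalIntegral.integral_mul_deriv_eq_deriv_mul hU hV (hU'c.intervalIntegrable _ _) (hV'c.intervalIntegrable _ _)
  have heq : (∫ r in (1/4:ℝ)..(9/4), (g r : ℂ) * Complex.exp (I * ((l * (r * u r) + c * r : ℝ) : ℂ))) =
      ∫ x in (1/4:ℝ)..(9/4), (-I * ((g x / P x : ℝ) : ℂ)) * (Complex.exp (I * ((l * (x * u x) + c * x : ℝ) : ℂ)) * (I * ((P x : ℝ) : ℂ))) := by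
    apply intervalIntegral.integral_congr
    intro x hx
    have h3 : (P x : ℂ) ≠ 0 := by exact_mod_cast (hPpos x).ne'
    simp only [ofReal_div]
    field_simp
    rw [I_sq]; ring
  rw [heq, hibp, h1, h2]
  simp only [zero_div, ofReal_zero, mul_zero, zero_mul, sub_zero, zero_sub, norm_neg]
  refine (intervalIntegral.norm_integral_le_of_norm_le_const (C := 30 * M / l) ?_).trans ?_
  · intro x hx
    rw [Set.uIoc_of_le (by norm_num)] at hx
    have hx' := Set.Ioc_subset_Icc_self hx
    have hp := hPpos x
    rw [norm_mul, hnorm, norm_mul, norm_neg, norm_I, one_mul, mul_one, norm_real, Real.norm_eq_abs, abs_div,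
      abs_of_pos (by positivity : 0 < P x ^ 2), div_le_div_iff₀ (by positivity) hl]
    have h3 : |g' x * P x - g x * P' x| ≤ M * P x + M * (7 * l) := by
      refine (abs_sub _ _).trans ?_
      rw [abs_mul, abs_mul, abs_of_pos hp]
      gcongr
      · exact hM' x hx'
      · exact hM x hx'
      · exact hP'b x hx'
    have h4 := hPl x
    have h5 : l ≤ 2 * P x := by linarith
    calc |g' x * P x - g x * P' x| * l ≤ (M * P x + M * (7 * l)) * l := by gcongr
      _ ≤ (M * P x + M * (7 * (2 * P x))) * (2 * P x) := by gcongr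
      _ = 30 * M * P x ^ 2 := by ring
  · rw [abs_of_pos (by norm_num)]
    apply le_of_eq; ring

lemma aux_2d (g g' : ℝ → ℝ) (M : ℝ) (hg : ∀ r, HasDerivAt g (g' r) r) (hg'c : Continuous g')
    (hM : ∀ r ∈ Set.Icc (1/4:ℝ) (9/4), |g r| ≤ M) (hM' : ∀ r ∈ Set.Icc (1/4:ℝ) (9/4), |g' r| ≤ M)
    (h1 : g (1/4) = 0) (h2 : g (9/4) = 0) (l a s θ₀ : ℝ) (hl : 0 < l) (ha : 0 < a) (ha1 : a ≤ 1)
    (hs : 0 ≤ s) :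
    ‖∫ r in (1/4:ℝ)..(9/4), ∫ θ in (-Real.pi)..Real.pi,
      (g r : ℂ) * Complex.exp (I * ((l * (r * √(1 + a^2 * r^2)) + (s * Real.cos (θ - θ₀)) * r : ℝ) : ℂ))‖
      ≤ 420 * M / √l := by
  have hnorm : ∀ x : ℝ, ‖Complex.exp (I * (x : ℂ))‖ = 1 := fun x => by
    rw [mul_comm]; exact Complex.norm_exp_ofReal_mul_I x
  have hgc : Continuous g := continuous_iff_continuousAt.mpr fun r => (hg r).continuousAt
  have hM0 : 0 ≤ M := (abs_nonneg _).trans (hM 1 (by constructor <;> norm_num))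
  have hq : 0 < √l := Real.sqrt_pos.mpr hl
  have hqq : √l * √l = l := Real.mul_self_sqrt hl.le
  have hpi := Real.pi_gt_three
  have hpi2 := Real.pi_lt_d2
  rcases le_total s (l / 2) with h | h
  · rw [intervalIntegral_intervalIntegral_swap]
    · refine (intervalIntegral.norm_integral_le_of_norm_le_const (C := 60 * M / √l) ?_).trans ?_
      · intro θ _
        have hc : |s * Real.cos (θ - θ₀)| ≤ l / 2 := by
          rw [abs_mul, abs_of_nonneg hs]
          have := Real.abs_cos_le_one (θ - θ₀)
          nlinarith
        rcases le_total 1 (√l) with h3 | h3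
        · refine (aux_radial g g' M hg hg'c hM hM' h1 h2 l a _ hl ha ha1 hc).trans ?_
          gcongr
          nlinarith
        · refine (intervalIntegral.norm_integral_le_of_norm_le_const (C := M) ?_).trans ?_
          · intro x hx
            rw [Set.uIoc_of_le (by norm_num)] at hx
            rw [norm_mul, hnorm, mul_one, norm_real]
            exact hM x (Set.Ioc_subset_Icc_self hx)
          · rw [le_div_iff₀ hq, abs_of_pos (by norm_num)]
            nlinarith
      · rw [abs_of_pos (by linarith), div_mul_eq_mul_div]
        apply div_le_div_of_nonneg_right _ hq.le
        nlinarith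
    · have hc : Continuous (fun p : ℝ × ℝ => (g p.1 : ℂ) * Complex.exp (I * ((l * (p.1 * √(1 + a^2 * p.1^2)) + (s * Real.cos (p.2 - θ₀)) * p.1 : ℝ) : ℂ))) := by
        fun_prop
      refine IntegrableOn.mono_set (hc.continuousOn.integrableOn_compact (isCompact_uIcc (a := (1/4:ℝ)) (b := 9/4) |>.prod (isCompact_uIcc (a := -Real.pi) (b := Real.pi)))) ?_
      exact Set.prod_mono Set.uIoc_subset_uIcc Set.uIoc_subset_uIcc
  · have hs0 : 0 < s := by linarith
    refine (intervalIntegral.norm_integral_le_of_norm_le_const (C := 60 * M / √l) ?_).trans ?_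
    · intro r hr
      rw [Set.uIoc_of_le (by norm_num)] at hr
      have hr' := Set.Ioc_subset_Icc_self hr
      have hr0 : 0 < r := by linarith [hr.1]
      have : (∫ θ in (-Real.pi)..Real.pi,
        (g r : ℂ) * Complex.exp (I * ((l * (r * √(1 + a^2 * r^2)) + (s * Real.cos (θ - θ₀)) * r : ℝ) : ℂ))) =
        ((g r : ℂ) * Complex.exp (I * ((l * (r * √(1 + a^2 * r^2)) : ℝ) : ℂ))) * 
        ∫ θ in (-Real.pi)..Real.pi, Complex.exp (I * (((s * r) * Real.cos (θ - θ₀) : ℝ) : ℂ)) := by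
        rw [← intervalIntegral.integral_const_mul]
        congr 1
        ext θ
        rw [mul_assoc (g r : ℂ), ← Complex.exp_add]
        congr 2
        push_cast; ring
      rw [this, norm_mul, norm_mul, hnorm, mul_one, norm_real]
      have hb := aux_bessel (s * r) θ₀ (by positivity)
      have h3 : √l ≤ 3 * √(s * r) := by
        rw [show (3:ℝ) = √9 by rw [show (9:ℝ) = 3^2 by norm_num]; simp, ← Real.sqrt_mul (by norm_num)]
        apply Real.sqrt_le_sqrt
        nlinarith [hr'.1]
      have h4 : 20 / √(s * r) ≤ 60 / √l := by
        rw [div_le_div_iff₀ (by positivity) hq]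
        linarith
      calc ‖g r‖ * _ ≤ M * (60 / √l) := by
            gcongr
            · exact hM r hr'
            · exact hb.trans h4
        _ = _ := by ring
    · rw [abs_of_pos (by norm_num), div_mul_eq_mul_div]
      apply div_le_div_of_nonneg_right _ hq.le
      nlinarith

lemma aux_polar (χ : ℝ → ℝ) (hχ : Continuous χ) (h0 : ∀ r, r ∉ Set.Ioo (1/4:ℝ) (9/4) → χ r = 0)
    (l a : ℝ) (y : EuclideanSpace ℝ (Fin 2)) :
    ∃ θ₀ : ℝ, (∫ η : EuclideanSpace ℝ (Fin 2),
      (χ ‖η‖ : ℂ) * Complex.exp (I * ((l * (‖η‖ * √(1 + a^2 * ‖η‖^2)) + inner ℝ η y : ℝ) : ℂ))) =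
    ∫ r in (1/4:ℝ)..(9/4), ∫ θ in (-Real.pi)..Real.pi,
      ((r * χ r : ℝ) : ℂ) * Complex.exp (I * ((l * (r * √(1 + a^2 * r^2)) + (‖y‖ * Real.cos (θ - θ₀)) * r : ℝ) : ℂ)) := by
  let B := Complex.orthonormalBasisOneI.repr
  have hmp : MeasurePreserving B := B.measurePreserving
  have hpi := Real.pi_gt_three
  set w := B.symm y with hw
  refine ⟨Complex.arg w, ?_⟩
  rw [← hmp.integral_comp B.toHomeomorph.measurableEmbedding, ← Complex.integral_comp_polarCoord_symm]
  have hinner : ∀ z, inner ℝ (B z) y = inner ℝ z w := fun z => by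
    rw [hw, ← B.inner_map_map z, B.apply_symm_apply]
  have hnw : ‖y‖ = ‖w‖ := by rw [hw, B.symm.norm_map]
  have hcont : Continuous (fun p : ℝ × ℝ => ((p.1 * χ p.1 : ℝ) : ℂ) * Complex.exp (I * ((l * (p.1 * √(1 + a^2 * p.1^2)) + (‖y‖ * Real.cos (p.2 - Complex.arg w)) * p.1 : ℝ) : ℂ))) := by
    fun_prop
  have hcongr : (∫ p in polarCoord.target, p.1 • (fun x : ℂ => (χ ‖B x‖ : ℂ) * Complex.exp (I * ((l * (‖B x‖ * √(1 + a^2 * ‖B x‖^2)) + inner ℝ (B x) y : ℝ) : ℂ))) (Complex.polarCoord.symm p)) =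
    ∫ p in polarCoord.target, (fun p : ℝ × ℝ => ((p.1 * χ p.1 : ℝ) : ℂ) * Complex.exp (I * ((l * (p.1 * √(1 + a^2 * p.1^2)) + (‖y‖ * Real.cos (p.2 - Complex.arg w)) * p.1 : ℝ) : ℂ))) p := by
    apply setIntegral_congr_fun polarCoord.open_target.measurableSet
    intro p hp
    have hp1 : 0 < p.1 := hp.1
    simp only
    rw [hinner, B.norm_map, Complex.norm_polarCoord_symm, abs_of_pos hp1, Complex.real_smul]
    have : inner ℝ (Complex.polarCoord.symm p) w = ‖y‖ * Real.cos (p.2 - Complex.arg w) * p.1 := by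
      rw [Complex.inner, Complex.polarCoord_symm_apply, hnw, Real.cos_sub]
      have e1 := Complex.norm_mul_cos_arg w
      have e2 := Complex.norm_mul_sin_arg w
      simp [Complex.cos_ofReal_re, Complex.sin_ofReal_re, Complex.cos_ofReal_im, Complex.sin_ofReal_im]
      rw [← e1, ← e2]
      ring
    rw [this]
    push_cast
    ring
  rw [hcongr]
  rw [setIntegral_eq_of_subset_of_forall_sdiff_eq_zero (s := Set.Ioc (1/4:ℝ) (9/4) ×ˢ Set.Ioo (-Real.pi) Real.pi) polarCoord.open_target.measurableSet]
  · rw [Measure.volume_eq_prod, setIntegral_prod, intervalIntegral.integral_of_le (by norm_num)]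
    · simp_rw [intervalIntegral.integral_of_le (by linarith : -Real.pi ≤ Real.pi), integral_Ioc_eq_integral_Ioo]
    · rw [← Measure.volume_eq_prod]
      exact (hcont.continuousOn.integrableOn_compact (isCompact_Icc.prod isCompact_Icc)).mono_set
        (Set.prod_mono Set.Ioc_subset_Icc_self Set.Ioo_subset_Icc_self)
  · rintro p ⟨hp1, hp2⟩
    exact ⟨lt_trans (by norm_num) hp1.1, hp2⟩
  · rintro p ⟨hp1, hp2⟩
    have : χ p.1 = 0 := by
      apply h0
      intro h
      exact hp2 ⟨Set.Ioo_subset_Ioc_self h, hp1.2⟩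
    simp [this]

lemma aux_kernel_unit (χ : ℝ → ℝ) (hχ : ContDiff ℝ 1 χ) (h0 : ∀ r, r ∉ Set.Ioo (1/4:ℝ) (9/4) → χ r = 0) :
    ∃ C : ℝ, 0 < C ∧ ∀ l a : ℝ, 0 < l → 0 < a → a ≤ 1 → ∀ y : EuclideanSpace ℝ (Fin 2),
    ‖∫ η : EuclideanSpace ℝ (Fin 2),
      (χ ‖η‖ : ℂ) * Complex.exp (I * ((l * (‖η‖ * √(1 + a^2 * ‖η‖^2)) + inner ℝ η y : ℝ) : ℂ))‖ ≤ C / √l := by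
  set g : ℝ → ℝ := fun r => r * χ r with hgdef
  have hg : ContDiff ℝ 1 g := contDiff_id.mul hχ
  have hgd : ∀ r, HasDerivAt g (deriv g r) r := fun r => (hg.differentiable (by norm_num) r).hasDerivAt
  have hg'c : Continuous (deriv g) := hg.continuous_deriv (by norm_num)
  obtain ⟨M1, hM1⟩ := isCompact_Icc.exists_bound_of_continuousOn (s := Set.Icc (1/4:ℝ) (9/4)) hg.continuous.continuousOn
  obtain ⟨M2, hM2⟩ := isCompact_Icc.exists_bound_of_continuousOn (s := Set.Icc (1/4:ℝ) (9/4)) hg'c.continuousOn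
  set M := max (max M1 M2) 1 with hMdef
  have hMpos : 0 < M := lt_of_lt_of_le one_pos (le_max_right _ _)
  refine ⟨420 * M, by positivity, ?_⟩
  intro l a hl ha ha1 y
  obtain ⟨θ₀, hθ⟩ := aux_polar χ hχ.continuous h0 l a y
  rw [hθ]
  refine aux_2d g (deriv g) M hgd hg'c (fun r hr => (hM1 r hr).trans ((le_max_left _ _).trans (le_max_left _ _)))
    (fun r hr => (hM2 r hr).trans ((le_max_right _ _).trans (le_max_left _ _))) ?_ ?_ l a ‖y‖ θ₀ hl ha ha1 (norm_nonneg _)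
  · simp only [hgdef]; rw [h0 _ (by simp)]; simp
  · simp only [hgdef]; rw [h0 _ (by simp)]; simp

lemma aux_const (C A : ℝ) (hA : 0 < A) (k : ℤ) :
    ((2:ℝ)^k)^2 * (C / √(A * (2:ℝ)^k)) = C * A ^ (-(1 : ℝ) / 2) * (2 : ℝ) ^ (3 * (k : ℝ) / 2) := by
  have h2 : (0:ℝ) < 2 ^ (k:ℝ) := by positivity
  rw [← Real.rpow_intCast, Real.sqrt_eq_rpow, Real.mul_rpow hA.le h2.le, ← Real.rpow_mul (by norm_num),
    neg_div, Real.rpow_neg hA.le, ← Real.rpow_natCast, ← Real.rpow_mul (by norm_num),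
    show 3 * (k:ℝ) / 2 = (k:ℝ) * ((2:ℕ):ℝ) - k * (1/2) by push_cast; ring, Real.rpow_sub (by norm_num)]
  field_simp

lemma aux_kernel (χ : ℝ → ℝ) (hχ : ContDiff ℝ 1 χ) (h0 : ∀ r, r ∉ Set.Ioo (1/4:ℝ) (9/4) → χ r = 0) :
    ∃ C : ℝ, 0 < C ∧ ∀ ε : ℝ, 0 < ε → ∀ k : ℤ, (2 : ℝ) ^ k * ε ≤ 1 → ∀ t : ℝ, 0 < t → ∀ x : E2,
    ‖𝓕⁻ (fun ξ : E2 => ((χ ((2 : ℝ) ^ (-k) * ‖ξ‖) : ℝ) : ℂ) * 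
      Complex.exp (Complex.I * ((t * (‖ξ‖ / ε * Real.sqrt (1 + ε ^ 2 * ‖ξ‖ ^ 2))) : ℝ))) x‖ ≤
      C * (t / ε) ^ (-(1 : ℝ) / 2) * (2 : ℝ) ^ (3 * (k : ℝ) / 2) := by
  obtain ⟨C, hC, h⟩ := aux_kernel_unit χ hχ h0
  refine ⟨C, hC, ?_⟩
  intro ε hε k hk t ht x
  have hN : (0:ℝ) < 2^k := by positivity
  have hte : 0 < t / ε := by positivity
  rw [Real.fourierInv_eq', ← aux_const C (t/ε) hte k]
  set N := (2:ℝ)^k with hNdef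
  set F : E2 → ℂ := fun v => Complex.exp ((2 * Real.pi * inner ℝ v x : ℝ) * I) • (((χ ((2 : ℝ) ^ (-k) * ‖v‖) : ℝ) : ℂ) * 
      Complex.exp (Complex.I * ((t * (‖v‖ / ε * Real.sqrt (1 + ε ^ 2 * ‖v‖ ^ 2))) : ℝ))) with hF
  have hsc := Measure.integral_comp_smul (volume : Measure E2) F N
  have hfr : Module.finrank ℝ E2 = 2 := by simp
  rw [hfr, abs_of_pos (by positivity)] at hsc
  have hint : (∫ v, F v) = ((N^2 : ℝ) : ℂ) * ∫ η, F (N • η) := by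
    rw [hsc, Complex.real_smul, ← mul_assoc, ← Complex.ofReal_mul, mul_inv_cancel₀ (by positivity)]
    simp
  have hFs : ∀ η : E2, F (N • η) = (χ ‖η‖ : ℂ) * Complex.exp (I * (((t / ε * N) * (‖η‖ * √(1 + (N * ε)^2 * ‖η‖^2)) + inner ℝ η ((2 * Real.pi * N) • x) : ℝ) : ℂ)) := by
    intro η
    simp only [hF]
    rw [norm_smul, Real.norm_of_nonneg hN.le, zpow_neg, ← hNdef, inv_mul_cancel_left₀ hN.ne', smul_eq_mul,
      mul_left_comm, ← Complex.exp_add, inner_smul_left, inner_smul_right]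
    rw [show ε ^ 2 * (N * ‖η‖) ^ 2 = (N * ε)^2 * ‖η‖^2 by ring]
    congr 2
    simp only [conj_trivial]
    push_cast
    ring
  change ‖∫ v, F v‖ ≤ _
  rw [hint, norm_mul, norm_real, Real.norm_of_nonneg (by positivity)]
  simp_rw [hFs]
  gcongr
  exact h _ _ (by positivity) (by positivity) hk _

lemma aux_young (m h : E2 → ℂ) (hm : Integrable m) (hh : Integrable h) (B : ℝ)
    (hB : ∀ x, ‖𝓕⁻ m x‖ ≤ B) (x : E2) :
    ‖𝓕⁻ (fun ξ => m ξ * 𝓕 h ξ) x‖ ≤ B * ∫ y, ‖h y‖ := by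
  set G : E2 → ℂ := fun ξ => Complex.exp ((2 * Real.pi * inner ℝ ξ x : ℝ) * I) * m ξ with hG
  have hGi : Integrable G := by
    apply hm.bdd_mul (c := 1) (Continuous.aestronglyMeasurable (by fun_prop))
    exact Filter.Eventually.of_forall fun ξ => (Complex.norm_exp_ofReal_mul_I _).le
  have h1 : 𝓕⁻ (fun ξ => m ξ * 𝓕 h ξ) x = ∫ ξ, 𝓕 h ξ • G ξ := by
    rw [Real.fourierInv_eq']
    congr 1
    ext ξ
    simp only [hG, smul_eq_mul]
    ring
  have h2 : (∫ ξ, 𝓕 h ξ • G ξ) = ∫ y, h y • 𝓕 G y := by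
    simpa using! (VectorFourier.integral_fourierIntegral_smul_eq_flip (L := innerₗ E2)
      Real.continuous_fourierChar continuous_inner hh hGi)
  have h3 : ∀ y, 𝓕 G y = 𝓕⁻ m (x - y) := by
    intro y
    rw [Real.fourier_eq', Real.fourierInv_eq']
    congr 1
    ext ξ
    simp only [hG, smul_eq_mul]
    rw [← mul_assoc, ← Complex.exp_add, inner_sub_right]
    congr 2
    push_cast
    ring
  rw [h1, h2, ← integral_const_mul]
  refine norm_integral_le_of_norm_le (hh.norm.const_mul B) (Filter.Eventually.of_forall fun y => ?_)
  rw [norm_smul, h3, mul_comm]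
  gcongr
  exact hB _

lemma aux_cont_fourier (f : E2 → ℂ) (hf : Integrable f) : Continuous (𝓕 f) :=
  VectorFourier.fourierIntegral_continuous Real.continuous_fourierChar
    (innerSL ℝ).continuous₂ hf

lemma aux_cont_fourierInv (f : E2 → ℂ) (hf : Integrable f) : Continuous (𝓕⁻ f) := by
  have : 𝓕⁻ f = fun x => 𝓕 f (-x) := by ext x; exact Real.fourierInv_eq_fourier_neg f x
  rw [this]
  exact (aux_cont_fourier f hf).comp continuous_neg

lemma aux_inv (F : E2 → ℂ) (hc : Continuous F) (hi : Integrable F) (h : Integrable (𝓕⁻ F)) :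
    𝓕 (𝓕⁻ F) = F := by
  apply hc.fourier_fourierInv_eq hi
  have : 𝓕 F = fun x => 𝓕⁻ F (-x) := by
    ext x; rw [Real.fourierInv_eq_fourier_neg, neg_neg]
  rw [this]
  exact h.comp_neg

lemma aux_fourier_zero (f : E2 → ℂ) (hf : ¬ Integrable f) : 𝓕 f = 0 := by
  ext w
  rw [Real.fourier_eq]
  apply integral_undef
  rwa [Real.fourierIntegral_convergent_iff]

lemma aux_cutoff (χ : ℝ → ℝ) (hχ : Continuous χ) (h0 : ∀ r, r ∉ Set.Icc (1/4:ℝ) (9/4) → χ r = 0) (k : ℤ)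
    (F : E2 → ℂ) (hF : Continuous F) :
    Continuous (fun ξ : E2 => ((χ ((2 : ℝ) ^ (-k) * ‖ξ‖) : ℝ) : ℂ) * F ξ) ∧ 
    Integrable (fun ξ : E2 => ((χ ((2 : ℝ) ^ (-k) * ‖ξ‖) : ℝ) : ℂ) * F ξ) := by
  have hc : Continuous (fun ξ : E2 => ((χ ((2 : ℝ) ^ (-k) * ‖ξ‖) : ℝ) : ℂ) * F ξ) := by fun_prop
  refine ⟨hc, hc.integrable_of_hasCompactSupport ?_⟩
  refine HasCompactSupport.intro (isCompact_closedBall (0 : E2) ((2:ℝ)^k * (9/4))) ?_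
  intro ξ hξ
  rw [h0]
  · simp
  · intro h
    apply hξ
    rw [mem_closedBall_zero_iff]
    have := h.2
    rwa [zpow_neg, inv_mul_le_iff₀ (by positivity)] at this

/-- **Wave-like dispersive estimate at low frequencies in 2D.** Below the frequency
threshold `ε⁻¹` (i.e. `2^k ε ≤ 1`), the frequency-localized propagator obeys
`‖P_{2^k}(e^{itH_ε} f)‖_{L^∞(ℝ²)} ≤ C (t/ε)^{-1/2} 2^{3k/2} ‖P_{2^k} f‖_{L¹(ℝ²)}`,
with `C` independent of `ε`, `t`, `k` and `f`. -/
theorem dispersive_2d_wave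
    (ψ : ℝ → ℝ) (hψ : ContDiff ℝ (⊤ : ℕ∞) ψ)
    (hψsupp : Function.support ψ ⊆ Set.Icc (1 / 2 : ℝ) 2)
    (hψsum : ∀ s : ℝ, 0 < s → ∑' k : ℤ, ψ ((2 : ℝ) ^ (-k) * s) = 1) :
    ∃ C > 0, ∀ ε : ℝ, 0 < ε → ∀ k : ℤ, (2 : ℝ) ^ k * ε ≤ 1 → ∀ t : ℝ, 0 < t →
      ∀ f : E2 → ℂ,
        eLpNorm (LP ψ k (Heps ε t f)) ⊤ volume ≤
          ENNReal.ofReal (C * (t / ε) ^ (-(1 : ℝ) / 2) * (2 : ℝ) ^ (3 * (k : ℝ) / 2)) *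
            eLpNorm (LP ψ k f) 1 volume := by
  let b : ContDiffBump (5/4 : ℝ) := ⟨3/4, 1, by norm_num, by norm_num⟩
  have hb0 : ∀ r, r ∉ Set.Ioo (1/4:ℝ) (9/4) → b r = 0 := by
    intro r hr
    by_contra h
    have : r ∈ Function.support b := h
    rw [b.support_eq, Real.ball_eq_Ioo] at this
    apply hr
    constructor
    · have := this.1; simp only [b] at this; linarith
    · have := this.2; simp only [b] at this; linarith
  have hb1 : ∀ r, ψ r ≠ 0 → b r = 1 := by
    intro r hr
    have := hψsupp hr
    apply b.one_of_mem_closedBall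
    rw [Real.closedBall_eq_Icc]
    constructor
    · simp only [b]; linarith [this.1]
    · simp only [b]; linarith [this.2]
  have hψ0 : ∀ r, r ∉ Set.Icc (1/4:ℝ) (9/4) → ψ r = 0 := by
    intro r hr
    by_contra h
    have := hψsupp h
    exact hr ⟨by linarith [this.1], by linarith [this.2]⟩
  obtain ⟨C, hC, hker⟩ := aux_kernel b b.contDiff hb0
  refine ⟨C, hC, ?_⟩
  intro ε hε k hk t ht f
  have hzero : ∀ g : E2 → ℂ, 𝓕 g = 0 → LP ψ k g = 0 := by
    intro g hg
    ext x
    simp [LP, hg, Real.fourierInv_eq']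
  have hBpos : 0 < C * (t / ε) ^ (-(1 : ℝ) / 2) * (2 : ℝ) ^ (3 * (k : ℝ) / 2) := by positivity
  by_cases hg : Integrable (Heps ε t f)
  swap
  · rw [hzero _ (aux_fourier_zero _ hg)]; simp
  by_cases hf : Integrable f
  swap
  · have : Heps ε t f = 0 := by
      ext x
      simp [Heps, aux_fourier_zero _ hf, Real.fourierInv_eq']
    rw [hzero]
    · simp
    · rw [this]; ext x; simp [Real.fourier_eq']
  have hfc := aux_cont_fourier f hf
  set e : E2 → ℂ := fun ξ => Complex.exp (Complex.I * ((t * (‖ξ‖ / ε * Real.sqrt (1 + ε ^ 2 * ‖ξ‖ ^ 2))) : ℝ)) with he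
  have hec : Continuous e := by
    rw [he]
    fun_prop
  have hmc : Continuous (fun ξ => e ξ * 𝓕 f ξ) := hec.mul hfc
  by_cases hmi : Integrable (fun ξ => e ξ * 𝓕 f ξ)
  swap
  · have : Heps ε t f = 0 := by
      ext x
      rw [Heps, Real.fourierInv_eq_fourier_neg, aux_fourier_zero _ hmi]; rfl
    rw [hzero]
    · simp
    · rw [this]; ext x; simp [Real.fourier_eq']
  have hFH : 𝓕 (Heps ε t f) = fun ξ => e ξ * 𝓕 f ξ := by
    exact aux_inv _ hmc hmi hg
  obtain ⟨hpc, hpi⟩ := aux_cutoff ψ hψ.continuous hψ0 k (𝓕 f) hfc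
  have hLPc : Continuous (LP ψ k f) := aux_cont_fourierInv _ hpi
  by_cases hLP : Integrable (LP ψ k f)
  swap
  · have : eLpNorm (LP ψ k f) 1 volume = ⊤ := by
      by_contra h
      exact hLP (memLp_one_iff_integrable.mp ⟨hLPc.aestronglyMeasurable, lt_top_iff_ne_top.mpr h⟩)
    rw [this, ENNReal.mul_top]
    · exact le_top
    · simpa using hBpos
  have hFLP : 𝓕 (LP ψ k f) = fun ξ => ((ψ ((2 : ℝ) ^ (-k) * ‖ξ‖) : ℝ) : ℂ) * 𝓕 f ξ :=
    aux_inv _ hpc hpi hLP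
  have hkeq : LP ψ k (Heps ε t f) = 𝓕⁻ (fun ξ => (((b ((2 : ℝ) ^ (-k) * ‖ξ‖) : ℝ) : ℂ) * e ξ) * 𝓕 (LP ψ k f) ξ) := by
    rw [LP, hFH, hFLP]
    congr 1
    ext ξ
    by_cases h : ψ ((2 : ℝ) ^ (-k) * ‖ξ‖) = 0
    · simp only [h, ofReal_zero, zero_mul, mul_zero]
    · rw [hb1 _ h]; push_cast; ring
  obtain ⟨-, hbi⟩ := aux_cutoff b b.continuous (fun r hr => hb0 r (fun h => hr (Set.Ioo_subset_Icc_self h))) k e hec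
  have hfin := aux_young _ (LP ψ k f) hbi hLP _ (hker ε hε k hk t ht)
  rw [← hkeq] at hfin
  have hn1 : eLpNorm (LP ψ k f) 1 volume = ENNReal.ofReal (∫ y, ‖LP ψ k f y‖) := by
    rw [eLpNorm_one_eq_lintegral_enorm, ofReal_integral_norm_eq_lintegral_enorm hLP]
  rw [hn1, ← ENNReal.ofReal_mul hBpos.le, eLpNorm_exponent_top]
  refine (eLpNormEssSup_le_of_ae_bound (Filter.Eventually.of_forall hfin))
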